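/- Let m ≥ 2 with 3 ∤ m, and let a, e be positive integers with e | m², a² | e, (e/a) | m, e/a² odd, gcd(e/a², a) = 1, and such that there exists a positive integer w with (e/a²) | (w² − w + 1). Then there exists a subgroup G of M with |G| = 3e such that: N(G) has order e; π(G) is the cyclic group of order 3 generated by a 3-cycle; |N(G) ∩ H_i| = a for each i ∈ {1,2,3}; and every element of G ∖ N(G) has order 3. -/

import Mathlib

/-- `V = (ZMod m)³`, written multiplicatively. -/
abbrev Vgrp (m : ℕ) : Type := Fin 3 → Multiplicative (ZMod m)

/-- The diagonal embedding `ZMod m → (ZMod m)³`. -/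
def diagHom (m : ℕ) : Multiplicative (ZMod m) →* Vgrp m :=
  MonoidHom.mk' (fun t _ => t) (fun _ _ => rfl)

/-- The diagonal subgroup `Δ = {(t,t,t)}` of `(ZMod m)³`. -/
def Δgrp (m : ℕ) : Subgroup (Vgrp m) := (diagHom m).range

/-- `W = (ZMod m)³ ⧸ Δ`. -/
abbrev Wgrp (m : ℕ) : Type := Vgrp m ⧸ Δgrp m

/-- The action of `S₃ = Equiv.Perm (Fin 3)` on `(ZMod m)³` permuting the coordinates. -/
def permV (m : ℕ) : Equiv.Perm (Fin 3) →* MulAut (Vgrp m) :=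
  MonoidHom.mk'
    (fun σ => MulEquiv.arrowCongr σ (MulEquiv.refl (Multiplicative (ZMod m))))
    (fun σ τ => by ext v i; rfl)

lemma permV_map_diag (m : ℕ) (σ : Equiv.Perm (Fin 3)) :
    (Δgrp m).map (permV m σ) = Δgrp m := by
  ext v
  constructor
  · rintro ⟨_, ⟨t, rfl⟩, rfl⟩
    exact ⟨t, rfl⟩
  · rintro ⟨t, rfl⟩
    exact ⟨diagHom m t, ⟨t, rfl⟩, rfl⟩

/-- The action of `S₃` on `W`, permuting the three coordinates (well defined since
`Δ` is invariant). -/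
def permW (m : ℕ) : Equiv.Perm (Fin 3) →* MulAut (Wgrp m) :=
  MonoidHom.mk'
    (fun σ => QuotientGroup.congr (Δgrp m) (Δgrp m) (permV m σ) (permV_map_diag m σ))
    (fun σ τ => by
      ext x
      refine QuotientGroup.induction_on x (fun v => ?_)
      rfl)

/-- `M = W ⋊ S₃`. -/
abbrev Mgrp (m : ℕ) : Type := Wgrp m ⋊[permW m] Equiv.Perm (Fin 3)

/-- `N(G) = G ∩ W`, where `W` is identified with the kernel of the projection
`π = rightHom : M → S₃` (i.e. with `W × {1} ≤ M`). -/
def NG {m : ℕ} (G : Subgroup (Mgrp m)) : Subgroup (Mgrp m) :=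
  G ⊓ (SemidirectProduct.rightHom : Mgrp m →* Equiv.Perm (Fin 3)).ker

/-- The subgroup of `V = (ZMod m)³` of triples whose two coordinates with index
different from `i` are equal. -/
def HV (m : ℕ) (i : Fin 3) : Subgroup (Vgrp m) :=
  MonoidHom.ker (MonoidHom.mk' (fun v : Vgrp m => v (i + 1) / v (i + 2))
    (fun _ _ => mul_div_mul_comm _ _ _ _))

/-- `H_i ≤ W`: classes of triples whose two coordinates with index different
from `i` are equal. -/
def Hsub (m : ℕ) (i : Fin 3) : Subgroup (Wgrp m) :=
  (HV m i).map (QuotientGroup.mk' (Δgrp m))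

/-- `H_i`, identified with the subgroup `H_i × {1}` of `M`. -/
def HsubM (m : ℕ) (i : Fin 3) : Subgroup (Mgrp m) :=
  (Hsub m i).map (SemidirectProduct.inl : Wgrp m →* Mgrp m)

/-- First coordinate `v₀ - v₂`. -/
def xh (m : ℕ) : Wgrp m →* Multiplicative (ZMod m) :=
  QuotientGroup.lift (Δgrp m)
    (MonoidHom.mk' (fun v : Vgrp m => v 0 / v 2) (fun _ _ => mul_div_mul_comm _ _ _ _))
    (by rintro _ ⟨t, rfl⟩; exact div_self' t)

/-- Second coordinate `v₁ - v₂`. -/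
def yh (m : ℕ) : Wgrp m →* Multiplicative (ZMod m) :=
  QuotientGroup.lift (Δgrp m)
    (MonoidHom.mk' (fun v : Vgrp m => v 1 / v 2) (fun _ _ => mul_div_mul_comm _ _ _ _))
    (by rintro _ ⟨t, rfl⟩; exact div_self' t)

def xc {m : ℕ} (w : Wgrp m) : ZMod m := (xh m w).toAdd
def yc {m : ℕ} (w : Wgrp m) : ZMod m := (yh m w).toAdd

lemma xc_mul {m : ℕ} (u w : Wgrp m) : xc (u * w) = xc u + xc w := by
  simp [xc]
lemma yc_mul {m : ℕ} (u w : Wgrp m) : yc (u * w) = yc u + yc w := by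
  simp [yc]
lemma xc_one {m : ℕ} : xc (1 : Wgrp m) = 0 := by simp [xc]
lemma yc_one {m : ℕ} : yc (1 : Wgrp m) = 0 := by simp [yc]
lemma xc_inv {m : ℕ} (u : Wgrp m) : xc (u⁻¹) = - xc u := by simp [xc]
lemma yc_inv {m : ℕ} (u : Wgrp m) : yc (u⁻¹) = - yc u := by simp [yc]

lemma xc_mk {m : ℕ} (v : Vgrp m) :
    xc (QuotientGroup.mk v : Wgrp m) = (v 0).toAdd - (v 2).toAdd := rfl
lemma yc_mk {m : ℕ} (v : Vgrp m) :
    yc (QuotientGroup.mk v : Wgrp m) = (v 1).toAdd - (v 2).toAdd := rfl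

lemma W_eq_one {m : ℕ} (u : Wgrp m) (hx : xc u = 0) (hy : yc u = 0) : u = 1 := by
  revert hx hy
  refine QuotientGroup.induction_on u (fun v => ?_)
  intro hx hy
  rw [xc_mk, sub_eq_zero] at hx
  rw [yc_mk, sub_eq_zero] at hy
  rw [QuotientGroup.eq_one_iff]
  refine ⟨v 2, ?_⟩
  funext i
  fin_cases i
  · exact hx.symm
  · exact hy.symm
  · rfl

lemma W_ext {m : ℕ} (u w : Wgrp m) (hx : xc u = xc w) (hy : yc u = yc w) : u = w := by
  rw [← mul_inv_eq_one]
  apply W_eq_one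
  · rw [xc_mul, xc_inv, hx, add_neg_cancel]
  · rw [yc_mul, yc_inv, hy, add_neg_cancel]

/-- The element with given coordinates. -/
def mkW {m : ℕ} (p q : ZMod m) : Wgrp m :=
  QuotientGroup.mk (![Multiplicative.ofAdd p, Multiplicative.ofAdd q, 1] : Vgrp m)

lemma xc_mkW {m : ℕ} (p q : ZMod m) : xc (mkW p q) = p := by
  simp [mkW, xc_mk]
lemma yc_mkW {m : ℕ} (p q : ZMod m) : yc (mkW p q) = q := by
  simp [mkW, yc_mk]

lemma xc_rot {m : ℕ} (u : Wgrp m) : xc (permW m (finRotate 3) u) = - yc u := by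
  refine QuotientGroup.induction_on u (fun v => ?_)
  have : xc (permW m (finRotate 3) (QuotientGroup.mk v : Wgrp m)) =
    (v 2).toAdd - (v 1).toAdd := rfl
  rw [this, yc_mk, neg_sub]

lemma yc_rot {m : ℕ} (u : Wgrp m) : yc (permW m (finRotate 3) u) = xc u - yc u := by
  refine QuotientGroup.induction_on u (fun v => ?_)
  have : yc (permW m (finRotate 3) (QuotientGroup.mk v : Wgrp m)) =
    (v 0).toAdd - (v 1).toAdd := rfl
  rw [this, yc_mk, xc_mk]
  ring

lemma mem_Hsub_aux {m : ℕ} (i : Fin 3) (u : Wgrp m) :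
    u ∈ Hsub m i ↔ ∃ v : Vgrp m, (v (i+1)).toAdd - (v (i+2)).toAdd = 0 ∧
      (QuotientGroup.mk v : Wgrp m) = u := Iff.rfl

lemma mem_Hsub0 {m : ℕ} (u : Wgrp m) : u ∈ Hsub m 0 ↔ yc u = 0 := by
  rw [mem_Hsub_aux]
  constructor
  · rintro ⟨v, hv, rfl⟩
    exact hv
  · refine QuotientGroup.induction_on u (fun v => ?_)
    intro h
    exact ⟨v, h, rfl⟩

lemma mem_Hsub1 {m : ℕ} (u : Wgrp m) : u ∈ Hsub m 1 ↔ xc u = 0 := by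
  rw [mem_Hsub_aux]
  constructor
  · rintro ⟨v, hv, rfl⟩
    have hv' : (v 2).toAdd - (v 0).toAdd = 0 := hv
    rw [xc_mk, ← neg_sub, hv', neg_zero]
  · refine QuotientGroup.induction_on u (fun v => ?_)
    intro h
    refine ⟨v, ?_, rfl⟩
    rw [xc_mk] at h
    have : (v 2).toAdd - (v 0).toAdd = 0 := by rw [← neg_sub, h, neg_zero]
    exact this

lemma mem_Hsub2 {m : ℕ} (u : Wgrp m) : u ∈ Hsub m 2 ↔ xc u = yc u := by
  rw [mem_Hsub_aux]
  constructor
  · rintro ⟨v, hv, rfl⟩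
    have hv' : (v 0).toAdd - (v 1).toAdd = 0 := hv
    rw [xc_mk, yc_mk, sub_eq_zero.mp hv']
  · refine QuotientGroup.induction_on u (fun v => ?_)
    intro h
    refine ⟨v, ?_, rfl⟩
    rw [xc_mk, yc_mk] at h
    have : (v 0).toAdd - (v 1).toAdd = 0 := sub_eq_zero.mpr (sub_left_injective h)
    exact this

lemma card_tors {m : ℕ} (hm : 2 ≤ m) (d : ℕ) (hd : d ∣ m) :
    Nat.card {x : ZMod m // (d : ZMod m) * x = 0} = d := by
  have : NeZero m := ⟨by omega⟩
  have h := IsCyclic.card_powMonoidHom_ker (G := Multiplicative (ZMod m)) d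
  have h2 : Nat.card (Multiplicative (ZMod m)) = m := by
    rw [Nat.card_congr Multiplicative.toAdd, Nat.card_zmod]
  rw [h2, Nat.gcd_eq_right hd] at h
  refine Eq.trans ?_ h
  refine Nat.card_congr (Equiv.subtypeEquiv Multiplicative.ofAdd (fun x => ?_))
  rw [MonoidHom.mem_ker, powMonoidHom_apply, ← ofAdd_nsmul, ofAdd_eq_one, nsmul_eq_mul]

/-- The subgroup `N`. -/
def Nsub (m n a : ℕ) (c : ZMod m) : Subgroup (Wgrp m) where
  carrier := {u | ((n * a : ℕ) : ZMod m) * xc u = 0 ∧ (a : ZMod m) * (yc u - c * xc u) = 0}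
  one_mem' := by simp [xc_one, yc_one]
  mul_mem' := by
    rintro u w ⟨h1, h2⟩ ⟨h3, h4⟩
    refine ⟨?_, ?_⟩
    · rw [xc_mul]; linear_combination h1 + h3
    · rw [xc_mul, yc_mul]; linear_combination h2 + h4
  inv_mem' := by
    rintro u ⟨h1, h2⟩
    refine ⟨?_, ?_⟩
    · rw [xc_inv]; linear_combination -h1
    · rw [xc_inv, yc_inv]; linear_combination -h2

lemma mem_Nsub {m n a : ℕ} {c : ZMod m} {u : Wgrp m} : u ∈ Nsub m n a c ↔
    ((n * a : ℕ) : ZMod m) * xc u = 0 ∧ (a : ZMod m) * (yc u - c * xc u) = 0 := Iff.rfl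

lemma card_Nsub {m n a : ℕ} (hm : 2 ≤ m) (hna : n * a ∣ m) (c : ZMod m) :
    Nat.card (Nsub m n a c) = n * a * a := by
  have e : Nsub m n a c ≃ {x : ZMod m // ((n * a : ℕ) : ZMod m) * x = 0} ×
      {x : ZMod m // (a : ZMod m) * x = 0} :=
    { toFun := fun u => (⟨xc u.1, u.2.1⟩, ⟨yc u.1 - c * xc u.1, u.2.2⟩)
      invFun := fun p => ⟨mkW p.1.1 (p.2.1 + c * p.1.1), by
        rw [mem_Nsub, xc_mkW, yc_mkW]
        refine ⟨p.1.2, ?_⟩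
        rw [add_sub_cancel_right]; exact p.2.2⟩
      left_inv := fun u => by
        apply Subtype.ext
        apply W_ext <;> simp [xc_mkW, yc_mkW]
      right_inv := fun p => by
        ext <;> simp [xc_mkW, yc_mkW] }
  rw [Nat.card_congr e, Nat.card_prod, card_tors hm _ hna,
    card_tors hm _ ((Dvd.intro_left n rfl).trans hna)]

lemma card_Nsub_inf {m n a : ℕ} (hm : 2 ≤ m) (hna : n * a ∣ m) (c q : ZMod m)
    (hc : c ^ 2 - c + 1 = n * q) (i : Fin 3) :
    Nat.card ↥(Nsub m n a c ⊓ Hsub m i) = a := by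
  refine Eq.trans ?_ (card_tors hm a ((Dvd.intro_left n rfl).trans hna))
  fin_cases i
  · refine Nat.card_congr
      { toFun := fun u => ⟨xc u.1, ?_⟩
        invFun := fun p => ⟨mkW p.1 0, ?_⟩
        left_inv := ?_
        right_inv := ?_ }
    · obtain ⟨u, ⟨h1, h2⟩, h3⟩ := u
      have h3 := (mem_Hsub0 u).1 h3
      rw [h3] at h2
      push_cast at h1
      linear_combination (-(1 - c)) * h2 + (-(a : ZMod m) * xc u) * (-hc) + q * h1
    · refine ⟨?_, (mem_Hsub0 _).2 (yc_mkW _ _)⟩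
      have := p.2
      refine mem_Nsub.2 ⟨?_, ?_⟩
      · rw [xc_mkW]; push_cast; linear_combination (n : ZMod m) * this
      · rw [xc_mkW, yc_mkW]; linear_combination (-c) * this
    · rintro ⟨u, h, h3⟩
      have h3 := (mem_Hsub0 u).1 h3
      apply Subtype.ext
      apply W_ext <;> simp [xc_mkW, yc_mkW, h3]
    · intro p
      apply Subtype.ext
      simp [xc_mkW]
  · refine Nat.card_congr
      { toFun := fun u => ⟨yc u.1, ?_⟩
        invFun := fun p => ⟨mkW 0 p.1, ?_⟩
        left_inv := ?_
        right_inv := ?_ }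
    · obtain ⟨u, ⟨h1, h2⟩, h3⟩ := u
      have h3 := (mem_Hsub1 u).1 h3
      rw [h3] at h2
      linear_combination h2
    · refine ⟨?_, (mem_Hsub1 _).2 (xc_mkW _ _)⟩
      have := p.2
      refine mem_Nsub.2 ⟨?_, ?_⟩
      · rw [xc_mkW, mul_zero]
      · rw [xc_mkW, yc_mkW]; linear_combination this
    · rintro ⟨u, h, h3⟩
      have h3 := (mem_Hsub1 u).1 h3
      apply Subtype.ext
      apply W_ext <;> simp [xc_mkW, yc_mkW, h3]
    · intro p
      apply Subtype.ext
      simp [yc_mkW]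
  · refine Nat.card_congr
      { toFun := fun u => ⟨xc u.1, ?_⟩
        invFun := fun p => ⟨mkW p.1 p.1, ?_⟩
        left_inv := ?_
        right_inv := ?_ }
    · obtain ⟨u, ⟨h1, h2⟩, h3⟩ := u
      have h3 := (mem_Hsub2 u).1 h3
      rw [← h3] at h2
      push_cast at h1
      linear_combination c * h2 + (-(a : ZMod m) * xc u) * (-hc) + q * h1
    · refine ⟨?_, (mem_Hsub2 _).2 (by rw [xc_mkW, yc_mkW])⟩
      have := p.2
      refine mem_Nsub.2 ⟨?_, ?_⟩
      · rw [xc_mkW]; push_cast; linear_combination (n : ZMod m) * this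
      · rw [xc_mkW, yc_mkW]; linear_combination (1 - c) * this
    · rintro ⟨u, h, h3⟩
      have h3 := (mem_Hsub2 u).1 h3
      apply Subtype.ext
      apply W_ext <;> simp [xc_mkW, yc_mkW, h3]
    · intro p
      apply Subtype.ext
      simp [xc_mkW]

lemma Nsub_rot {m n a : ℕ} (c q : ZMod m) (hc : c ^ 2 - c + 1 = n * q) (u : Wgrp m)
    (hu : u ∈ Nsub m n a c) : permW m (finRotate 3) u ∈ Nsub m n a c := by
  obtain ⟨h1, h2⟩ := hu
  push_cast at h1
  refine mem_Nsub.2 ⟨?_, ?_⟩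
  · rw [xc_rot]; push_cast
    linear_combination (-(n : ZMod m)) * h2 - c * h1
  · rw [xc_rot, yc_rot]
    linear_combination (c - 1) * h2 + (a : ZMod m) * xc u * hc + q * h1

lemma Nsub_zpow {m n a : ℕ} (c q : ZMod m) (hc : c ^ 2 - c + 1 = n * q)
    (τ : Equiv.Perm (Fin 3)) (hτ : τ ∈ Subgroup.zpowers (finRotate 3)) :
    ∀ u ∈ Nsub m n a c, permW m τ u ∈ Nsub m n a c := by
  rw [← mem_powers_iff_mem_zpowers] at hτ
  obtain ⟨k, rfl⟩ := hτ
  induction k with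
  | zero => intro u hu; simpa using hu
  | succ k ih =>
    intro u hu
    have := ih _ (Nsub_rot c q hc u hu)
    simpa [pow_succ, map_mul, MulAut.mul_apply] using this

/-- The subgroup `G`. -/
def Gsub (m n a : ℕ) (c q : ZMod m) (hc : c ^ 2 - c + 1 = n * q) : Subgroup (Mgrp m) where
  carrier := {g | g.left ∈ Nsub m n a c ∧ g.right ∈ Subgroup.zpowers (finRotate 3)}
  one_mem' := ⟨one_mem _, one_mem _⟩
  mul_mem' := by
    rintro g h ⟨h1, h2⟩ ⟨h3, h4⟩
    exact ⟨mul_mem h1 (Nsub_zpow c q hc _ h2 _ h3), mul_mem h2 h4⟩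
  inv_mem' := by
    rintro g ⟨h1, h2⟩
    exact ⟨Nsub_zpow c q hc _ (inv_mem h2) _ (inv_mem h1), inv_mem h2⟩

lemma mem_Gsub {m n a : ℕ} {c q : ZMod m} {hc : c ^ 2 - c + 1 = n * q} {g : Mgrp m} :
    g ∈ Gsub m n a c q hc ↔
    g.left ∈ Nsub m n a c ∧ g.right ∈ Subgroup.zpowers (finRotate 3) := Iff.rfl

lemma isThree : (finRotate 3).IsThreeCycle := by
  rw [← card_support_eq_three_iff]
  decide

lemma card_Gsub {m n a : ℕ} (c q : ZMod m) (hc : c ^ 2 - c + 1 = n * q) :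
    Nat.card (Gsub m n a c q hc) = Nat.card (Nsub m n a c) * 3 := by
  have e : Gsub m n a c q hc ≃ Nsub m n a c × Subgroup.zpowers (finRotate 3) :=
    { toFun := fun g => (⟨g.1.left, g.2.1⟩, ⟨g.1.right, g.2.2⟩)
      invFun := fun p => ⟨⟨p.1.1, p.2.1⟩, p.1.2, p.2.2⟩
      left_inv := fun g => rfl
      right_inv := fun p => rfl }
  rw [Nat.card_congr e, Nat.card_prod, Nat.card_zpowers, isThree.orderOf]

lemma NG_Gsub {m n a : ℕ} (c q : ZMod m) (hc : c ^ 2 - c + 1 = n * q) :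
    NG (Gsub m n a c q hc) = (Nsub m n a c).map SemidirectProduct.inl := by
  ext g
  constructor
  · rintro ⟨⟨h1, _⟩, h2⟩
    refine ⟨g.left, h1, ?_⟩
    exact SemidirectProduct.ext rfl (Eq.symm h2)
  · rintro ⟨u, hu, rfl⟩
    exact ⟨⟨hu, one_mem _⟩, rfl⟩

lemma rot_norm {m : ℕ} (u : Wgrp m) :
    u * permW m (finRotate 3) u * permW m (finRotate 3) (permW m (finRotate 3) u) = 1 := by
  apply W_eq_one
  · simp only [xc_mul, xc_rot, yc_rot]; ring
  · simp only [yc_mul, xc_rot, yc_rot]; ring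

lemma perm_cases : ∀ τ : Equiv.Perm (Fin 3), τ ∈ Subgroup.zpowers (finRotate 3) → τ ≠ 1 →
    τ = finRotate 3 ∨ τ = finRotate 3 * finRotate 3 := by
  intro τ h h1
  rw [← mem_powers_iff_mem_zpowers] at h
  obtain ⟨k, rfl⟩ := h
  have h3 : finRotate 3 ^ 3 = 1 := by decide
  have hk := pow_mod_orderOf (finRotate 3) k
  rw [isThree.orderOf] at hk
  have : k % 3 < 3 := Nat.mod_lt _ (by norm_num)
  simp only at h1 ⊢
  rw [← hk] at h1 ⊢
  interval_cases k % 3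
  · exact absurd (pow_zero _) h1
  · left; exact pow_one _
  · right; exact pow_two _

lemma rot_rot (m : ℕ) (u : Wgrp m) :
    permW m (finRotate 3) (permW m (finRotate 3) (permW m (finRotate 3) u)) = u := by
  apply W_ext
  · simp only [xc_rot, yc_rot]; ring
  · simp only [xc_rot, yc_rot]; ring

lemma order3 {m n a : ℕ} (c q : ZMod m) (hc : c ^ 2 - c + 1 = n * q) (g : Mgrp m)
    (hg : g ∈ Gsub m n a c q hc) (hN : g ∉ NG (Gsub m n a c q hc)) : orderOf g = 3 := by
  have hr : g.right ≠ 1 := fun h => hN ⟨hg, h⟩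
  have : Fact (Nat.Prime 3) := ⟨Nat.prime_three⟩
  apply orderOf_eq_prime
  · have key := rot_norm g.left
    obtain ⟨u, τ⟩ := g
    rcases perm_cases _ hg.2 hr with h | h
    · simp only at h key
      subst h
      rw [pow_succ, pow_two]
      apply SemidirectProduct.ext
      · simpa [SemidirectProduct.mul_left, MulAut.mul_apply] using key
      · change finRotate 3 * finRotate 3 * finRotate 3 = 1
        decide
    · simp only at h key
      subst h
      rw [pow_succ, pow_two]
      apply SemidirectProduct.ext
      · simp only [SemidirectProduct.mul_left, SemidirectProduct.mul_right, map_mul,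
          MulAut.mul_apply, SemidirectProduct.one_left, rot_rot]
        rw [← key, mul_right_comm]
      · change finRotate 3 * finRotate 3 * (finRotate 3 * finRotate 3) *
          (finRotate 3 * finRotate 3) = 1
        decide
  · rintro rfl
    exact hr rfl

/-- Proposition 3.5(i) of Dalla Volta–Montanucci–Zini (case `3 ∤ m`): existence of a
subgroup `G ≤ M` with `π(G)` cyclic of order 3 generated by a 3-cycle, with given
numerical invariants; every element of `G ∖ N(G)` has order 3. -/
theorem stmt10 (m : ℕ) (hm : 2 ≤ m) (hm3 : ¬ 3 ∣ m) (a e : ℕ)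
    (ha0 : 0 < a) (he0 : 0 < e)
    (h1 : e ∣ m ^ 2) (h2 : a ^ 2 ∣ e) (h3 : e / a ∣ m)
    (h4 : Odd (e / a ^ 2)) (h5 : Nat.gcd (e / a ^ 2) a = 1)
    (h6 : ∃ w : ℕ, 0 < w ∧ (e / a ^ 2) ∣ (w ^ 2 - w + 1)) :
    ∃ G : Subgroup (Mgrp m), ∃ σ : Equiv.Perm (Fin 3), σ.IsThreeCycle ∧
      Nat.card ↥G = 3 * e ∧
      Nat.card ↥(NG G) = e ∧
      G.map (SemidirectProduct.rightHom : Mgrp m →* Equiv.Perm (Fin 3)) =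
        Subgroup.zpowers σ ∧
      (∀ i : Fin 3, Nat.card ↥(NG G ⊓ HsubM m i) = a) ∧
      (∀ x ∈ G, x ∉ NG G → orderOf x = 3) := by
  obtain ⟨n, rfl⟩ := h2
  have ha2 : 0 < a ^ 2 := by positivity
  rw [Nat.mul_div_cancel_left n ha2] at h6
  have hd : a ^ 2 * n / a = n * a := by
    rw [show a ^ 2 * n = a * (n * a) by ring, Nat.mul_div_cancel_left _ ha0]
  rw [hd] at h3
  obtain ⟨w, hw0, k, hk⟩ := h6
  have hc : (w : ZMod m) ^ 2 - w + 1 = n * (k : ZMod m) := by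
    have hle : w ≤ w ^ 2 := Nat.le_self_pow (by norm_num) w
    have := congrArg (Nat.cast : ℕ → ZMod m) hk
    push_cast [Nat.cast_sub hle] at this
    exact this
  have hinj : Function.Injective (SemidirectProduct.inl : Wgrp m →* Mgrp m) :=
    SemidirectProduct.inl_injective
  refine ⟨Gsub m n a w k hc, finRotate 3, isThree, ?_, ?_, ?_, ?_, ?_⟩
  · rw [card_Gsub, card_Nsub hm h3]; ring
  · rw [NG_Gsub, Subgroup.card_map_of_injective hinj, card_Nsub hm h3]; ring
  · ext τ
    constructor
    · rintro ⟨g, hg, rfl⟩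
      exact hg.2
    · intro h
      exact ⟨SemidirectProduct.inr τ, ⟨one_mem _, h⟩, rfl⟩
  · intro i
    rw [NG_Gsub, HsubM, ← Subgroup.map_inf _ _ _ hinj, Subgroup.card_map_of_injective hinj]
    exact card_Nsub_inf hm h3 _ _ hc i
  · exact order3 _ _ hc
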